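/- Let M ≥ 0, let ℓ ≥ 1 be an integer, and let φ ∈ C^ℓ(ℝ^N) satisfy |∂^β φ(x)| ≤ (1 + ‖x‖)^{−𝐍−M} for all multi-indices β with |β| ≤ ℓ and all x ∈ ℝ^N. Then there is a constant C > 0 such that for every multi-index β with |β| ≤ ℓ and every x in the regular set Ω = {x ∈ ℝ^N : ⟨x,α⟩ ≠ 0 for all α ∈ R}, |T^β φ(x)| ≤ C (1 + ‖x‖)^{−𝐍−M}, where T^β = T₁^{β₁} ∘ ⋯ ∘ T_N^{β_N} is the iterated Dunkl operator acting on smooth functions on the G-invariant open set Ω. -/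

import Mathlib

open MeasureTheory Metric
open scoped ENNReal RealInnerProductSpace BigOperators

noncomputable section

/-- The reflection `σ_α` in the hyperplane orthogonal to `α`. -/
def dunklReflect {N : ℕ} (α x : EuclideanSpace ℝ (Fin N)) : EuclideanSpace ℝ (Fin N) :=
  x - (2 * ⟪x, α⟫ / ‖α‖ ^ 2) • α

/-- The Dunkl weight measure `dw` with density `∏_{α ∈ R} |⟨x,α⟩|^{k α}`. -/
def dunklMeasure (N : ℕ) (R : Finset (EuclideanSpace ℝ (Fin N)))
    (k : EuclideanSpace ℝ (Fin N) → ℝ) : Measure (EuclideanSpace ℝ (Fin N)) :=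
  (volume : Measure (EuclideanSpace ℝ (Fin N))).withDensity fun x =>
    ENNReal.ofReal (∏ α ∈ R, |⟪x, α⟫| ^ (k α))

/-- The homogeneous dimension `𝐍 = N + Σ_{α ∈ R} k(α)`. -/
def homDim (N : ℕ) (R : Finset (EuclideanSpace ℝ (Fin N)))
    (k : EuclideanSpace ℝ (Fin N) → ℝ) : ℝ :=
  N + ∑ α ∈ R, k α

/-- The partial derivative in the `j`-th coordinate direction. -/
def pderivE {N : ℕ} (j : Fin N) (f : EuclideanSpace ℝ (Fin N) → ℂ) :
    EuclideanSpace ℝ (Fin N) → ℂ :=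
  fun x => fderiv ℝ f x (EuclideanSpace.single j 1)

/-- The iterated partial derivative `∂^β = ∂_1^{β 1} ∘ ⋯ ∘ ∂_N^{β N}`
for a multi-index `β`. -/
def mderivE {N : ℕ} (β : Fin N → ℕ) (f : EuclideanSpace ℝ (Fin N) → ℂ) :
    EuclideanSpace ℝ (Fin N) → ℂ :=
  (List.finRange N).foldr (fun j g => (pderivE j)^[β j] g) f

/-- The Dunkl operator `T_j`. -/
def dunklT (N : ℕ) (R : Finset (EuclideanSpace ℝ (Fin N)))
    (k : EuclideanSpace ℝ (Fin N) → ℝ) (j : Fin N)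
    (f : EuclideanSpace ℝ (Fin N) → ℂ) : EuclideanSpace ℝ (Fin N) → ℂ :=
  fun x => fderiv ℝ f x (EuclideanSpace.single j 1) +
    ∑ α ∈ R, ((k α / 2 * α j : ℝ) : ℂ) * ((f x - f (dunklReflect α x)) / ((⟪α, x⟫ : ℝ) : ℂ))

/-- The iterated Dunkl operator `T^β = T_1^{β 1} ∘ ⋯ ∘ T_N^{β N}`. -/
def dunklTpow (N : ℕ) (R : Finset (EuclideanSpace ℝ (Fin N)))
    (k : EuclideanSpace ℝ (Fin N) → ℝ) (β : Fin N → ℕ)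
    (f : EuclideanSpace ℝ (Fin N) → ℂ) : EuclideanSpace ℝ (Fin N) → ℂ :=
  (List.finRange N).foldr (fun j g => (dunklT N R k j)^[β j] g) f


/-- Directional derivative. -/
def ddv {N : ℕ} (v : EuclideanSpace ℝ (Fin N)) (f : EuclideanSpace ℝ (Fin N) → ℂ) :
    EuclideanSpace ℝ (Fin N) → ℂ :=
  fun x => fderiv ℝ f x v

/-- Class of `C^m` functions all of whose derivatives up to order `m` are `O(w)`. -/
def DecP {N : ℕ} (w : EuclideanSpace ℝ (Fin N) → ℝ) :
    ℕ → (EuclideanSpace ℝ (Fin N) → ℂ) → Prop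
  | 0, f => Continuous f ∧ ∃ C, ∀ x, ‖f x‖ ≤ C * w x
  | m + 1, f => Differentiable ℝ f ∧ (∃ C, ∀ x, ‖f x‖ ≤ C * w x) ∧ ∀ v, DecP w m (ddv v f)

lemma DecP.bound {N : ℕ} {w : EuclideanSpace ℝ (Fin N) → ℝ} {m : ℕ}
    {f : EuclideanSpace ℝ (Fin N) → ℂ} (h : DecP w m f) : ∃ C, ∀ x, ‖f x‖ ≤ C * w x := by
  cases m with
  | zero => exact h.2
  | succ m => exact h.2.1

lemma DecP.contDiff {N : ℕ} {w : EuclideanSpace ℝ (Fin N) → ℝ} {m : ℕ}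
    {f : EuclideanSpace ℝ (Fin N) → ℂ} (h : DecP w m f) : ContDiff ℝ m f := by
  induction m generalizing f with
  | zero => simpa using (contDiff_zero (𝕜 := ℝ)).2 h.1
  | succ m ih =>
    have := contDiff_succ_iff_fderiv_apply (𝕜 := ℝ) (n := (m : WithTop ℕ∞)) (f := f)
    push_cast
    rw [this]
    refine ⟨h.1, ?_, fun v => ih (h.2.2 v)⟩
    intro hm
    exact absurd hm (by simp)

lemma DecP.continuous {N : ℕ} {w : EuclideanSpace ℝ (Fin N) → ℝ} {m : ℕ}
    {f : EuclideanSpace ℝ (Fin N) → ℂ} (h : DecP w m f) : Continuous f :=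
  h.contDiff.continuous

lemma DecP.of_succ {N : ℕ} {w : EuclideanSpace ℝ (Fin N) → ℝ} {m : ℕ}
    {f : EuclideanSpace ℝ (Fin N) → ℂ} (h : DecP w (m + 1) f) : DecP w m f := by
  induction m generalizing f with
  | zero => exact ⟨h.1.continuous, h.2.1⟩
  | succ m ih => exact ⟨h.1, h.2.1, fun v => ih (h.2.2 v)⟩

lemma DecP.mono {N : ℕ} {w : EuclideanSpace ℝ (Fin N) → ℝ} {m n : ℕ} (hmn : m ≤ n)
    {f : EuclideanSpace ℝ (Fin N) → ℂ} (h : DecP w n f) : DecP w m f := by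
  induction hmn with
  | refl => exact h
  | step _ ih => exact ih h.of_succ

lemma DecP.add {N : ℕ} {w : EuclideanSpace ℝ (Fin N) → ℝ} {m : ℕ}
    {f g : EuclideanSpace ℝ (Fin N) → ℂ} (hf : DecP w m f) (hg : DecP w m g) :
    DecP w m (fun x => f x + g x) := by
  have hb : ∃ C, ∀ x, ‖f x + g x‖ ≤ C * w x := by
    obtain ⟨C, hC⟩ := hf.bound
    obtain ⟨D, hD⟩ := hg.bound
    refine ⟨C + D, fun x => (norm_add_le _ _).trans ?_⟩
    have := hC x
    have := hD x
    linarith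
  induction m generalizing f g with
  | zero => exact ⟨hf.1.add hg.1, hb⟩
  | succ m ih =>
    refine ⟨hf.1.add hg.1, hb, fun v => ?_⟩
    have : ddv v (fun x => f x + g x) = fun x => ddv v f x + ddv v g x := by
      funext x
      simp [ddv, fderiv_fun_add (hf.1 x) (hg.1 x)]
    rw [this]
    refine ih (hf.2.2 v) (hg.2.2 v) ?_
    obtain ⟨C, hC⟩ := (hf.2.2 v).bound
    obtain ⟨D, hD⟩ := (hg.2.2 v).bound
    refine ⟨C + D, fun x => (norm_add_le _ _).trans ?_⟩
    have := hC x
    have := hD x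
    linarith

lemma DecP.const_mul {N : ℕ} {w : EuclideanSpace ℝ (Fin N) → ℝ} {m : ℕ} (c : ℂ)
    {f : EuclideanSpace ℝ (Fin N) → ℂ} (hf : DecP w m f) :
    DecP w m (fun x => c * f x) := by
  have key : ∀ f : EuclideanSpace ℝ (Fin N) → ℂ, (∃ C, ∀ x, ‖f x‖ ≤ C * w x) →
      ∃ C, ∀ x, ‖c * f x‖ ≤ C * w x := by
    rintro f ⟨C, hC⟩
    refine ⟨‖c‖ * C, fun x => ?_⟩
    rw [norm_mul, mul_assoc]
    exact mul_le_mul_of_nonneg_left (hC x) (norm_nonneg _)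
  induction m generalizing f with
  | zero => exact ⟨continuous_const.mul hf.1, key f hf.2⟩
  | succ m ih =>
    refine ⟨hf.1.const_mul c, key f hf.2.1, fun v => ?_⟩
    have : ddv v (fun x => c * f x) = fun x => c * ddv v f x := by
      funext x
      simp [ddv, fderiv_const_mul (hf.1 x)]
    rw [this]
    exact ih (hf.2.2 v)

lemma DecP.zero {N : ℕ} {w : EuclideanSpace ℝ (Fin N) → ℝ} {m : ℕ} :
    DecP w m (fun _ : EuclideanSpace ℝ (Fin N) => (0 : ℂ)) := by
  induction m with
  | zero => exact ⟨continuous_const, 0, by simp⟩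
  | succ m ih =>
    refine ⟨differentiable_const 0, ⟨0, by simp⟩, fun v => ?_⟩
    have : ddv v (fun _ : EuclideanSpace ℝ (Fin N) => (0 : ℂ)) = fun _ => 0 := by
      funext x
      simp [ddv]
    rw [this]
    exact ih

lemma DecP.sum {N : ℕ} {w : EuclideanSpace ℝ (Fin N) → ℝ} {m : ℕ} {ι : Type*} (s : Finset ι)
    {f : ι → EuclideanSpace ℝ (Fin N) → ℂ} (hf : ∀ i ∈ s, DecP w m (f i)) :
    DecP w m (fun x => ∑ i ∈ s, f i x) := by
  classical
  induction s using Finset.induction_on with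
  | empty => simpa using DecP.zero
  | insert a s ha ih =>
    simp only [Finset.sum_insert ha]
    exact (hf a (by simp)).add (ih fun i hi => hf i (by simp [hi]))

lemma ddv_comm {N : ℕ} (u v : EuclideanSpace ℝ (Fin N)) {f : EuclideanSpace ℝ (Fin N) → ℂ}
    (hf : ContDiff ℝ 2 f) : ddv u (ddv v f) = ddv v (ddv u f) := by
  have hd : Differentiable ℝ (fderiv ℝ f) :=
    (hf.fderiv_right (m := 1) (by norm_num)).differentiable (by norm_num)
  have key : ∀ a b : EuclideanSpace ℝ (Fin N), ∀ x,
      ddv a (ddv b f) x = fderiv ℝ (fderiv ℝ f) x a b := by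
    intro a b x
    unfold ddv
    rw [fderiv_clm_apply (hd x) (differentiableAt_const b)]
    simp
  funext x
  rw [key, key]
  have hs : IsSymmSndFDerivAt ℝ f x :=
    ContDiffAt.isSymmSndFDerivAt (n := 2) hf.contDiffAt (by simp)
  exact hs.eq u v

/-- Iterated directional derivative in direction `α`. -/
def ddp {N : ℕ} (α : EuclideanSpace ℝ (Fin N)) (p : ℕ) (f : EuclideanSpace ℝ (Fin N) → ℂ) :
    EuclideanSpace ℝ (Fin N) → ℂ := (ddv α)^[p] f

lemma ddp_succ {N : ℕ} (α : EuclideanSpace ℝ (Fin N)) (p : ℕ)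
    (f : EuclideanSpace ℝ (Fin N) → ℂ) : ddp α (p + 1) f = ddv α (ddp α p f) := by
  simp [ddp, Function.iterate_succ_apply']

lemma ddp_succ' {N : ℕ} (α : EuclideanSpace ℝ (Fin N)) (p : ℕ)
    (f : EuclideanSpace ℝ (Fin N) → ℂ) : ddp α (p + 1) f = ddp α p (ddv α f) := by
  simp [ddp, Function.iterate_succ_apply]

lemma DecP.ddp {N : ℕ} {w : EuclideanSpace ℝ (Fin N) → ℝ} {m p : ℕ}
    (α : EuclideanSpace ℝ (Fin N)) {f : EuclideanSpace ℝ (Fin N) → ℂ}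
    (hf : DecP w (m + p) f) : DecP w m (ddp α p f) := by
  induction p generalizing f with
  | zero => exact hf
  | succ p ih =>
    rw [ddp_succ']
    exact ih (hf.2.2 α)

lemma ddv_ddp_comm {N : ℕ} {w : EuclideanSpace ℝ (Fin N) → ℝ} {p : ℕ}
    (α v : EuclideanSpace ℝ (Fin N)) {f : EuclideanSpace ℝ (Fin N) → ℂ}
    (hf : DecP w (p + 1) f) : ddv v (ddp α p f) = ddp α p (ddv v f) := by
  induction p generalizing f with
  | zero => rfl
  | succ p ih =>
    rw [ddp_succ', ddp_succ', ih (hf.2.2 α), ddv_comm]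
    exact (hf.mono (by omega : 2 ≤ p + 1 + 1)).contDiff

/-- The segment map from `x` to its reflection. -/
def segA {N : ℕ} (α : EuclideanSpace ℝ (Fin N)) (t : ℝ) (x : EuclideanSpace ℝ (Fin N)) :
    EuclideanSpace ℝ (Fin N) := x - (t * ⟪α, x⟫) • α

/-- The averaging operator along the segment. -/
def avG {N : ℕ} (α : EuclideanSpace ℝ (Fin N)) (p : ℕ) (h : EuclideanSpace ℝ (Fin N) → ℂ) :
    EuclideanSpace ℝ (Fin N) → ℂ :=
  fun x => ∫ t in (0 : ℝ)..1, ((t ^ p : ℝ) : ℂ) * h (segA α t x)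

/-- The segment map as a continuous linear map. -/
def segL {N : ℕ} (α : EuclideanSpace ℝ (Fin N)) (t : ℝ) :
    EuclideanSpace ℝ (Fin N) →L[ℝ] EuclideanSpace ℝ (Fin N) :=
  ContinuousLinearMap.id ℝ _ - t • ((innerSL ℝ α).smulRight α)

lemma segL_apply {N : ℕ} (α : EuclideanSpace ℝ (Fin N)) (t : ℝ) (x : EuclideanSpace ℝ (Fin N)) :
    segL α t x = segA α t x := by
  simp [segL, segA, smul_smul]

lemma segA_continuous {N : ℕ} (α : EuclideanSpace ℝ (Fin N)) :
    Continuous (fun q : EuclideanSpace ℝ (Fin N) × ℝ => segA α q.2 q.1) := by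
  unfold segA
  fun_prop

lemma avG_continuous {N : ℕ} (α : EuclideanSpace ℝ (Fin N)) (p : ℕ)
    {h : EuclideanSpace ℝ (Fin N) → ℂ} (hh : Continuous h) : Continuous (avG α p h) := by
  unfold avG
  apply intervalIntegral.continuous_parametric_intervalIntegral_of_continuous'
  have := hh.comp (segA_continuous α)
  simp only [Function.uncurry_def]
  exact (by fun_prop : Continuous fun q : EuclideanSpace ℝ (Fin N) × ℝ =>
    ((q.2 ^ p : ℝ) : ℂ)).mul this

lemma avG_hasFDerivAt {N : ℕ} (α : EuclideanSpace ℝ (Fin N)) (p : ℕ)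
    {h : EuclideanSpace ℝ (Fin N) → ℂ} (hh : ContDiff ℝ 1 h) (x : EuclideanSpace ℝ (Fin N)) :
    HasFDerivAt (avG α p h)
      (∫ t in (0 : ℝ)..1, ((t ^ p : ℝ) : ℂ) • (fderiv ℝ h (segA α t x)).comp (segL α t)) x ∧
    Continuous (fun t : ℝ => ((t ^ p : ℝ) : ℂ) • (fderiv ℝ h (segA α t x)).comp (segL α t)) := by
  have hfd : Continuous (fderiv ℝ h) := hh.continuous_fderiv (by norm_num)
  have hLc : Continuous (segL α) := by
    unfold segL
    fun_prop
  have hF' : Continuous (fun q : EuclideanSpace ℝ (Fin N) × ℝ =>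
      ((q.2 ^ p : ℝ) : ℂ) • (fderiv ℝ h (segA α q.2 q.1)).comp (segL α q.2)) := by
    have h1 := hfd.comp (segA_continuous α)
    have h2 : Continuous (fun q : EuclideanSpace ℝ (Fin N) × ℝ => segL α q.2) :=
      hLc.comp continuous_snd
    have h3 : Continuous (fun q : EuclideanSpace ℝ (Fin N) × ℝ => ((q.2 ^ p : ℝ) : ℂ)) := by
      fun_prop
    exact h3.smul (h1.clm_comp h2)
  have hFx : ∀ y, Continuous (fun t : ℝ => ((t ^ p : ℝ) : ℂ) * h (segA α t y)) := by
    intro y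
    have h1 : Continuous (fun t : ℝ => h (segA α t y)) :=
      hh.continuous.comp ((segA_continuous α).comp (by fun_prop : Continuous fun t : ℝ => (y, t)))
    exact (by fun_prop : Continuous fun t : ℝ => ((t ^ p : ℝ) : ℂ)).mul h1
  have hc : Continuous (fun t : ℝ =>
      ((t ^ p : ℝ) : ℂ) • (fderiv ℝ h (segA α t x)).comp (segL α t)) :=
    hF'.comp (by fun_prop : Continuous fun t : ℝ => (x, t))
  refine ⟨?_, hc⟩
  obtain ⟨B, hB⟩ := ((isCompact_closedBall x 1).prod (isCompact_Icc (a := (0 : ℝ)) (b := 1))).exists_bound_of_continuousOn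
    hF'.continuousOn
  refine intervalIntegral.hasFDerivAt_integral_of_dominated_of_fderiv_le (𝕜 := ℝ)
    (F := fun y t => ((t ^ p : ℝ) : ℂ) * h (segA α t y))
    (F' := fun y t => ((t ^ p : ℝ) : ℂ) • (fderiv ℝ h (segA α t y)).comp (segL α t))
    (s := closedBall x 1) (bound := fun _ => B) (closedBall_mem_nhds x one_pos) ?_ ?_ ?_ ?_ ?_ ?_
  · exact Filter.Eventually.of_forall fun y => (hFx y).aestronglyMeasurable
  · exact (hFx x).intervalIntegrable _ _
  · exact hc.aestronglyMeasurable
  · refine Filter.Eventually.of_forall fun t ht y hy => hB (y, t) ⟨hy, ?_⟩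
    rw [Set.uIoc_of_le zero_le_one] at ht
    exact ⟨ht.1.le, ht.2⟩
  · exact intervalIntegrable_const
  · refine Filter.Eventually.of_forall fun t ht y hy => ?_
    have h1 : HasFDerivAt (segA α t) (segL α t) y := by
      have : segA α t = segL α t := by
        funext z
        rw [segL_apply]
      rw [this]
      exact (segL α t).hasFDerivAt
    have h2 := ((hh.differentiable (by norm_num)) (segA α t y)).hasFDerivAt.comp y h1
    exact h2.const_smul ((t ^ p : ℝ) : ℂ)

lemma avG_differentiable {N : ℕ} (α : EuclideanSpace ℝ (Fin N)) (p : ℕ)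
    {h : EuclideanSpace ℝ (Fin N) → ℂ} (hh : ContDiff ℝ 1 h) : Differentiable ℝ (avG α p h) :=
  fun x => (avG_hasFDerivAt α p hh x).1.differentiableAt

lemma ddv_continuous {N : ℕ} (v : EuclideanSpace ℝ (Fin N))
    {h : EuclideanSpace ℝ (Fin N) → ℂ} (hh : ContDiff ℝ 1 h) : Continuous (ddv v h) := by
  have hfd : Continuous (fderiv ℝ h) := hh.continuous_fderiv (by norm_num)
  exact hfd.clm_apply continuous_const

lemma avG_int_cont {N : ℕ} (α : EuclideanSpace ℝ (Fin N)) (p : ℕ)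
    {h : EuclideanSpace ℝ (Fin N) → ℂ} (hh : Continuous h) (x : EuclideanSpace ℝ (Fin N)) :
    Continuous (fun t : ℝ => ((t ^ p : ℝ) : ℂ) * h (segA α t x)) := by
  have h1 : Continuous (fun t : ℝ => h (segA α t x)) :=
    hh.comp ((segA_continuous α).comp (by fun_prop : Continuous fun t : ℝ => (x, t)))
  exact (by fun_prop : Continuous fun t : ℝ => ((t ^ p : ℝ) : ℂ)).mul h1

lemma ddv_avG {N : ℕ} (α v : EuclideanSpace ℝ (Fin N)) (p : ℕ)
    {h : EuclideanSpace ℝ (Fin N) → ℂ} (hh : ContDiff ℝ 1 h) :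
    ddv v (avG α p h) = fun x =>
      avG α p (ddv v h) x + (-((⟪α, v⟫ : ℝ) : ℂ)) * avG α (p + 1) (ddv α h) x := by
  funext x
  obtain ⟨h1, h2⟩ := avG_hasFDerivAt α p hh x
  unfold ddv at *
  rw [h1.fderiv, ContinuousLinearMap.intervalIntegral_apply (h2.intervalIntegrable _ _)]
  unfold avG
  rw [← intervalIntegral.integral_const_mul, ← intervalIntegral.integral_add]
  · refine intervalIntegral.integral_congr fun t _ => ?_
    simp [segL_apply, segA, pow_succ]
    ring
  · exact (avG_int_cont α p (ddv_continuous v hh) x).intervalIntegrable _ _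
  · exact (continuous_const.mul
      (avG_int_cont α (p + 1) (ddv_continuous α hh) x)).intervalIntegrable _ _

lemma segA_hasDerivAt {N : ℕ} (α x : EuclideanSpace ℝ (Fin N)) 
    {h : EuclideanSpace ℝ (Fin N) → ℂ} (hh : ContDiff ℝ 1 h) (t : ℝ) :
    HasDerivAt (fun t => h (segA α t x)) (-((⟪α, x⟫ : ℝ) : ℂ) * ddv α h (segA α t x)) t := by
  have h1 : HasDerivAt (fun t => segA α t x) (-(⟪α, x⟫ • α)) t := by
    unfold segA
    have := ((hasDerivAt_id t).mul_const ⟪α, x⟫).smul_const α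
    simpa using this.const_sub x
  have h2 := ((hh.differentiable (by norm_num)) (segA α t x)).hasFDerivAt.comp_hasDerivAt t h1
  have e : -((⟪α, x⟫ : ℝ) : ℂ) * ddv α h (segA α t x)
      = fderiv ℝ h (segA α t x) (-(⟪α, x⟫ • α)) := by
    simp [ddv]
  rw [e]
  exact h2

/-- integration by parts along the segment, `p = 0` -/
lemma avG_parts_zero {N : ℕ} (α x : EuclideanSpace ℝ (Fin N))
    {h : EuclideanSpace ℝ (Fin N) → ℂ} (hh : ContDiff ℝ 1 h) :
    ((⟪α, x⟫ : ℝ) : ℂ) * avG α 0 (ddv α h) x = h x - h (segA α 1 x) := by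
  have h1 := intervalIntegral.integral_eq_sub_of_hasDerivAt (a := 0) (b := 1)
    (fun t _ => segA_hasDerivAt α x hh t)
    (by
      have := avG_int_cont α 0 (ddv_continuous α hh) x
      simp only [pow_zero, Complex.ofReal_one, one_mul] at this
      exact (continuous_const.mul this).intervalIntegrable _ _)
  rw [intervalIntegral.integral_const_mul] at h1
  have h0 : segA α 0 x = x := by simp [segA]
  rw [h0] at h1
  simp only [avG, pow_zero, Complex.ofReal_one, one_mul]
  linear_combination -h1

lemma avG_parts_succ {N : ℕ} (α x : EuclideanSpace ℝ (Fin N)) (p : ℕ)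
    {h : EuclideanSpace ℝ (Fin N) → ℂ} (hh : ContDiff ℝ 1 h) :
    ((⟪α, x⟫ : ℝ) : ℂ) * avG α (p + 1) (ddv α h) x
      = (p + 1) * avG α p h x - h (segA α 1 x) := by
  have hu : ∀ t : ℝ, HasDerivAt (fun t : ℝ => ((t ^ (p + 1) : ℝ) : ℂ))
      ((((p + 1 : ℝ) * t ^ p : ℝ)) : ℂ) t := by
    intro t
    have := (hasDerivAt_pow (p + 1) t).ofReal_comp
    simpa using this
  have h1 := intervalIntegral.integral_mul_deriv_eq_deriv_mul (a := 0) (b := 1)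
    (fun t _ => hu t) (fun t _ => segA_hasDerivAt α x hh t)
    ((by fun_prop : Continuous fun t : ℝ =>
      ((((p + 1 : ℝ) * t ^ p : ℝ)) : ℂ)).intervalIntegrable _ _)
    (by
      have := avG_int_cont α 0 (ddv_continuous α hh) x
      simp only [pow_zero, Complex.ofReal_one, one_mul] at this
      exact (continuous_const.mul this).intervalIntegrable _ _)
  have e1 : (∫ t in (0:ℝ)..1, ((t ^ (p + 1) : ℝ) : ℂ) *
      (-((⟪α, x⟫ : ℝ) : ℂ) * ddv α h (segA α t x)))
      = -((⟪α, x⟫ : ℝ) : ℂ) * avG α (p + 1) (ddv α h) x := by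
    unfold avG
    rw [← intervalIntegral.integral_const_mul]
    refine intervalIntegral.integral_congr fun t _ => ?_
    ring
  have e2 : (∫ t in (0:ℝ)..1, ((((p + 1 : ℝ) * t ^ p : ℝ)) : ℂ) * h (segA α t x))
      = (p + 1) * avG α p h x := by
    unfold avG
    rw [← intervalIntegral.integral_const_mul]
    refine intervalIntegral.integral_congr fun t _ => ?_
    push_cast
    ring
  rw [e1, e2] at h1
  simp only [one_pow, Complex.ofReal_one, one_mul, ne_eq, Nat.add_eq_zero_iff, one_ne_zero,
    and_false, not_false_eq_true, zero_pow, Complex.ofReal_zero, zero_mul, sub_zero] at h1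
  linear_combination -h1

/-- The weight `(1 + ‖x‖)^(-a)`. -/
def decW {N : ℕ} (a : ℝ) (x : EuclideanSpace ℝ (Fin N)) : ℝ := (1 + ‖x‖) ^ (-a)

lemma decW_pos {N : ℕ} (a : ℝ) (x : EuclideanSpace ℝ (Fin N)) : 0 < decW a x :=
  Real.rpow_pos_of_pos (by positivity) _

lemma nonneg_of_decW {N : ℕ} {a C : ℝ} {h : EuclideanSpace ℝ (Fin N) → ℂ}
    (hC : ∀ x, ‖h x‖ ≤ C * decW a x) : 0 ≤ C := by
  have h0 := (norm_nonneg _).trans (hC 0)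
  exact nonneg_of_mul_nonneg_left h0 (decW_pos a 0)

lemma decW_near {N : ℕ} {a : ℝ} (ha : 0 ≤ a) {α x : EuclideanSpace ℝ (Fin N)}
    (hα : ‖α‖ = Real.sqrt 2) (hx : |⟪α, x⟫| ≤ 1) {t : ℝ} (ht0 : 0 ≤ t) (ht1 : t ≤ 1) :
    decW a (segA α t x) ≤ (3 : ℝ) ^ a * decW a x := by
  have h1 : ‖x‖ ≤ ‖segA α t x‖ + 2 := by
    have e : x = segA α t x + (t * ⟪α, x⟫) • α := by simp [segA]
    have h2 : ‖(t * ⟪α, x⟫) • α‖ ≤ 2 := by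
      rw [norm_smul, hα, Real.norm_eq_abs, abs_mul, abs_of_nonneg ht0]
      have hs : Real.sqrt 2 ≤ 2 := by
        rw [Real.sqrt_le_left (by norm_num)]
        norm_num
      have : t * |⟪α, x⟫| ≤ 1 := mul_le_one₀ ht1 (abs_nonneg _) hx
      have h0 : 0 ≤ t * |⟪α, x⟫| := by positivity
      nlinarith [Real.sqrt_nonneg 2]
    calc ‖x‖ = ‖segA α t x + (t * ⟪α, x⟫) • α‖ := by rw [← e]
      _ ≤ _ := (norm_add_le _ _).trans (by linarith)
  unfold decW
  set y := ‖segA α t x‖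
  have hy : 0 ≤ y := norm_nonneg _
  have hx0 : 0 ≤ ‖x‖ := norm_nonneg _
  have h3 : (1 + ‖x‖) / 3 ≤ 1 + y := by linarith
  have h4 : (1 + y) ^ (-a) ≤ ((1 + ‖x‖) / 3) ^ (-a) :=
    Real.rpow_le_rpow_of_nonpos (by positivity) h3 (by linarith)
  refine h4.trans (le_of_eq ?_)
  rw [Real.div_rpow (by positivity) (by norm_num), Real.rpow_neg (by norm_num : (0:ℝ) ≤ 3)]
  field_simp

lemma segA_one_norm {N : ℕ} {α : EuclideanSpace ℝ (Fin N)} (x : EuclideanSpace ℝ (Fin N))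
    (hα : ‖α‖ = Real.sqrt 2) : ‖segA α 1 x‖ = ‖x‖ := by
  have h2 : ‖α‖ ^ 2 = 2 := by rw [hα]; norm_num
  have : ‖segA α 1 x‖ ^ 2 = ‖x‖ ^ 2 := by
    unfold segA
    rw [norm_sub_sq_real, norm_smul, mul_pow, h2, inner_smul_right, real_inner_comm α x,
      Real.norm_eq_abs, sq_abs]
    ring
  exact (sq_eq_sq₀ (norm_nonneg _) (norm_nonneg _)).1 this

lemma decW_refl {N : ℕ} (a : ℝ) {α : EuclideanSpace ℝ (Fin N)} (x : EuclideanSpace ℝ (Fin N))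
    (hα : ‖α‖ = Real.sqrt 2) : decW a (segA α 1 x) = decW a x := by
  unfold decW
  rw [segA_one_norm x hα]

lemma avG_near {N : ℕ} {a : ℝ} (ha : 0 ≤ a) {α x : EuclideanSpace ℝ (Fin N)} (p : ℕ)
    (hα : ‖α‖ = Real.sqrt 2) (hx : |⟪α, x⟫| ≤ 1) {h : EuclideanSpace ℝ (Fin N) → ℂ} {C : ℝ}
    (hC : ∀ x, ‖h x‖ ≤ C * decW a x) : ‖avG α p h x‖ ≤ C * (3 : ℝ) ^ a * decW a x := by
  have hC0 := nonneg_of_decW hC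
  unfold avG
  have := intervalIntegral.norm_integral_le_of_norm_le_const (a := (0 : ℝ)) (b := 1)
    (f := fun t : ℝ => ((t ^ p : ℝ) : ℂ) * h (segA α t x)) (C := C * (3 : ℝ) ^ a * decW a x) ?_
  · simpa using this
  · intro t ht
    rw [Set.uIoc_of_le zero_le_one] at ht
    rw [norm_mul, Complex.norm_real, Real.norm_eq_abs, abs_of_nonneg (pow_nonneg ht.1.le p)]
    have h1 : t ^ p ≤ 1 := pow_le_one₀ ht.1.le ht.2
    have h2 := (hC (segA α t x)).trans
      (mul_le_mul_of_nonneg_left (decW_near ha hα hx ht.1.le ht.2) hC0)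
    calc t ^ p * ‖h (segA α t x)‖ ≤ 1 * ‖h (segA α t x)‖ :=
          mul_le_mul_of_nonneg_right h1 (norm_nonneg _)
      _ ≤ _ := by rw [one_mul, mul_assoc]; exact h2

lemma far_bound {z : ℂ} {s B : ℝ} {y : ℂ} (hs : 1 ≤ |s|) (h : (s : ℂ) * z = y) (hy : ‖y‖ ≤ B) :
    ‖z‖ ≤ B := by
  rw [← h, norm_mul, Complex.norm_real, Real.norm_eq_abs] at hy
  nlinarith [norm_nonneg z]

lemma avQ_decay {N : ℕ} {a : ℝ} (ha : 0 ≤ a) {α : EuclideanSpace ℝ (Fin N)}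
    (hα : ‖α‖ = Real.sqrt 2) (p : ℕ) {f : EuclideanSpace ℝ (Fin N) → ℂ}
    (hf : DecP (decW a) (p + 1) f) :
    ∃ C, ∀ x, ‖avG α p (ddp α (p + 1) f) x‖ ≤ C * decW a x := by
  obtain ⟨D, hD⟩ : ∃ D, ∀ x, ‖ddp α (p + 1) f x‖ ≤ D * decW a x :=
    (DecP.ddp (m := 0) α (by simpa using hf)).bound
  have hD0 := nonneg_of_decW hD
  obtain ⟨B, hB⟩ : ∃ B, ∀ x, ‖ddp α p f x‖ ≤ B * decW a x :=
    (DecP.ddp (m := 1) (p := p) α (by rwa [add_comm])).bound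
  have hh : ContDiff ℝ 1 (ddp α p f) := by
    have := (DecP.ddp (m := 1) (p := p) α (by rwa [add_comm])).contDiff (f := ddp α p f) (w := decW a)
    simpa using this
  have hB0 := nonneg_of_decW hB
  suffices hfar : ∃ C, 0 ≤ C ∧ ∀ x, 1 ≤ |⟪α, x⟫| →
      ‖avG α p (ddp α (p + 1) f) x‖ ≤ C * decW a x by
    obtain ⟨C, hC0, hC⟩ := hfar
    refine ⟨D * 3 ^ a + C, fun x => ?_⟩
    have hw := (decW_pos a x).le
    rcases le_total |⟪α, x⟫| 1 with hx | hx
    · have := avG_near ha p hα hx hD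
      have h2 := mul_nonneg hC0 hw
      rw [add_mul]
      linarith
    · have := hC x hx
      have h2 : 0 ≤ D * 3 ^ a * decW a x := by positivity
      rw [add_mul]
      linarith
  cases p with
  | zero =>
    refine ⟨B + B, by linarith, fun x hx => ?_⟩
    rw [ddp_succ]
    refine far_bound hx (avG_parts_zero α x hh) ((norm_sub_le _ _).trans ?_)
    have h1 := hB x
    have h2 := hB (segA α 1 x)
    rw [decW_refl a x hα] at h2
    linarith
  | succ p =>
    obtain ⟨E, hE⟩ := avQ_decay ha hα p hf.of_succ
    have hE0 := nonneg_of_decW hE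
    refine ⟨(p + 1) * E + B, by positivity, fun x hx => ?_⟩
    rw [ddp_succ]
    refine far_bound hx (avG_parts_succ α x p hh) ((norm_sub_le _ _).trans ?_)
    have h1 := hE x
    have h2 := hB (segA α 1 x)
    rw [decW_refl a x hα] at h2
    have h3 : ‖((p : ℂ) + 1) * avG α p (ddp α (p + 1) f) x‖ ≤ (p + 1) * (E * decW a x) := by
      rw [norm_mul]
      have : ‖((p : ℂ) + 1)‖ = p + 1 := by
        have e : ((p : ℂ) + 1) = ((p + 1 : ℕ) : ℂ) := by push_cast; rfl
        rw [e, Complex.norm_natCast]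
        push_cast
        rfl
      rw [this]
      exact mul_le_mul_of_nonneg_left h1 (by positivity)
    linarith

lemma avQ_DecP {N : ℕ} {a : ℝ} (ha : 0 ≤ a) {α : EuclideanSpace ℝ (Fin N)}
    (hα : ‖α‖ = Real.sqrt 2) (m p : ℕ) {f : EuclideanSpace ℝ (Fin N) → ℂ}
    (hf : DecP (decW a) (m + p + 1) f) :
    DecP (decW a) m (avG α p (ddp α (p + 1) f)) := by
  have hdec := avQ_decay ha hα p (hf.mono (by omega : p + 1 ≤ m + p + 1))
  induction m generalizing p f with
  | zero =>
    refine ⟨avG_continuous α p ?_, hdec⟩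
    exact (DecP.ddp (m := 0) (p := p + 1) α (hf.mono (by omega))).continuous
  | succ m ih =>
    have hh : ContDiff ℝ 1 (ddp α (p + 1) f) := by
      have := (DecP.ddp (m := 1) (p := p + 1) α (hf.mono (by omega))).contDiff
        (f := ddp α (p + 1) f) (w := decW a)
      simpa using this
    refine ⟨avG_differentiable α p hh, hdec, fun v => ?_⟩
    rw [ddv_avG α v p hh, ddv_ddp_comm (w := decW a) α v (hf.mono (by omega)), ← ddp_succ]
    have hv : DecP (decW a) (m + p + 1) (ddv v f) :=
      (hf.mono (by omega : m + p + 1 + 1 ≤ m + 1 + p + 1)).2.2 v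
    have hf' : DecP (decW a) (m + (p + 1) + 1) f := hf.mono (by omega)
    refine DecP.add (ih p hv (avQ_decay ha hα p (hv.mono (by omega)))) (DecP.const_mul _ ?_)
    exact ih (p + 1) hf' (avQ_decay ha hα (p + 1) (hf'.mono (by omega)))

lemma dunklReflect_eq {N : ℕ} {α : EuclideanSpace ℝ (Fin N)} (x : EuclideanSpace ℝ (Fin N))
    (hα : ‖α‖ = Real.sqrt 2) : dunklReflect α x = segA α 1 x := by
  have h2 : ‖α‖ ^ 2 = 2 := by rw [hα]; norm_num
  unfold dunklReflect segA
  rw [h2, real_inner_comm α x]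
  congr 2
  ring

lemma dunklT_step {N : ℕ} {R : Finset (EuclideanSpace ℝ (Fin N))}
    {k : EuclideanSpace ℝ (Fin N) → ℝ} (hRnorm : ∀ α ∈ R, ‖α‖ = Real.sqrt 2)
    {a : ℝ} (ha : 0 ≤ a) (j : Fin N) {m : ℕ} {f : EuclideanSpace ℝ (Fin N) → ℂ}
    (hf : DecP (decW a) (m + 1) f) :
    ∃ g, DecP (decW a) m g ∧ ∀ x, (∀ α ∈ R, ⟪α, x⟫ ≠ 0) → dunklT N R k j f x = g x := by
  refine ⟨fun x => ddv (EuclideanSpace.single j 1) f x +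
    ∑ α ∈ R, ((k α / 2 * α j : ℝ) : ℂ) * avG α 0 (ddp α 1 f) x, ?_, ?_⟩
  · refine DecP.add (hf.2.2 _) (DecP.sum R fun α hα => DecP.const_mul _ ?_)
    exact avQ_DecP ha (hRnorm α hα) m 0 hf
  · intro x hx
    unfold dunklT
    congr 1
    refine Finset.sum_congr rfl fun α hα => ?_
    congr 1
    have h1 : ContDiff ℝ 1 f := by
      have := (hf.mono (by omega : 1 ≤ m + 1)).contDiff
      simpa using this
    rw [dunklReflect_eq x (hRnorm α hα), ← avG_parts_zero α x h1]
    have : ((⟪α, x⟫ : ℝ) : ℂ) ≠ 0 := by exact_mod_cast hx α hα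
    rw [mul_div_cancel_left₀ _ this]
    rfl

lemma dunklT_congr {N : ℕ} {R : Finset (EuclideanSpace ℝ (Fin N))}
    {k : EuclideanSpace ℝ (Fin N) → ℝ}
    (hRrefl : ∀ α ∈ R, ∀ β ∈ R, dunklReflect α β ∈ R) (j : Fin N)
    {f g : EuclideanSpace ℝ (Fin N) → ℂ}
    (hfg : ∀ x, (∀ α ∈ R, ⟪α, x⟫ ≠ 0) → f x = g x) :
    ∀ x, (∀ α ∈ R, ⟪α, x⟫ ≠ 0) → dunklT N R k j f x = dunklT N R k j g x := by
  intro x hx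
  have hev : f =ᶠ[nhds x] g := by
    have : ∀ᶠ y in nhds x, ∀ α ∈ R, ⟪α, y⟫ ≠ 0 := by
      rw [Filter.eventually_all_finset]
      intro α hα
      exact (by fun_prop : Continuous fun y : EuclideanSpace ℝ (Fin N) =>
        ⟪α, y⟫).continuousAt.eventually_ne (hx α hα)
    exact this.mono hfg
  unfold dunklT
  rw [hev.fderiv_eq]
  congr 1
  refine Finset.sum_congr rfl fun α hα => ?_
  rw [hfg x hx, hfg (dunklReflect α x)]
  intro β hβ
  have := hx _ (hRrefl α hα β hβ)
  have e : ⟪β, dunklReflect α x⟫ = ⟪dunklReflect α β, x⟫ := by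
    unfold dunklReflect
    rw [inner_sub_left, inner_sub_right, inner_smul_left, inner_smul_right, real_inner_comm α x]
    simp
    ring
  rwa [e]

lemma dunklT_iter {N : ℕ} {R : Finset (EuclideanSpace ℝ (Fin N))}
    {k : EuclideanSpace ℝ (Fin N) → ℝ} (hRnorm : ∀ α ∈ R, ‖α‖ = Real.sqrt 2)
    (hRrefl : ∀ α ∈ R, ∀ β ∈ R, dunklReflect α β ∈ R)
    {a : ℝ} (ha : 0 ≤ a) (j : Fin N) (n m : ℕ) {f F : EuclideanSpace ℝ (Fin N) → ℂ}
    (hf : DecP (decW a) (m + n) f) (hF : ∀ x, (∀ α ∈ R, ⟪α, x⟫ ≠ 0) → F x = f x) :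
    ∃ g, DecP (decW a) m g ∧
      ∀ x, (∀ α ∈ R, ⟪α, x⟫ ≠ 0) → (dunklT N R k j)^[n] F x = g x := by
  induction n generalizing f F with
  | zero => exact ⟨f, hf, hF⟩
  | succ n ih =>
    obtain ⟨g, hg, hgF⟩ := dunklT_step (k := k) hRnorm ha j (m := m + n) hf
    obtain ⟨q, hq⟩ := ih (F := dunklT N R k j F) hg
      (fun x hx => (dunklT_congr hRrefl j hF x hx).trans (hgF x hx))
    exact ⟨q, hq⟩

lemma dunklT_foldr {N : ℕ} {R : Finset (EuclideanSpace ℝ (Fin N))}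
    {k : EuclideanSpace ℝ (Fin N) → ℝ} (hRnorm : ∀ α ∈ R, ‖α‖ = Real.sqrt 2)
    (hRrefl : ∀ α ∈ R, ∀ β ∈ R, dunklReflect α β ∈ R)
    {a : ℝ} (ha : 0 ≤ a) (β : Fin N → ℕ) {f : EuclideanSpace ℝ (Fin N) → ℂ}
    (L : List (Fin N)) (m : ℕ) (hf : DecP (decW a) (m + (L.map β).sum) f) :
    ∃ g, DecP (decW a) m g ∧
      ∀ x, (∀ α ∈ R, ⟪α, x⟫ ≠ 0) →
        L.foldr (fun j g => (dunklT N R k j)^[β j] g) f x = g x := by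
  induction L generalizing m with
  | nil => exact ⟨f, hf, fun _ _ => rfl⟩
  | cons j L ih =>
    obtain ⟨g, hg, hgF⟩ := ih (m + β j) (by simpa [add_assoc] using hf)
    exact dunklT_iter hRnorm hRrefl ha j (β j) m hg hgF

/-- Iterated coordinate derivative along a list. -/
def lderiv {N : ℕ} (L : List (Fin N)) (f : EuclideanSpace ℝ (Fin N) → ℂ) :
    EuclideanSpace ℝ (Fin N) → ℂ := L.foldr (fun j g => pderivE j g) f

lemma pderivE_contDiff {N : ℕ} (j : Fin N) {n : ℕ} {f : EuclideanSpace ℝ (Fin N) → ℂ}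
    (hf : ContDiff ℝ (n + 1 : ℕ) f) : ContDiff ℝ n (pderivE j f) := by
  unfold pderivE
  exact (hf.fderiv_right (m := n) (by norm_cast)).clm_apply contDiff_const

lemma lderiv_contDiff {N : ℕ} (L : List (Fin N)) {n : ℕ} {f : EuclideanSpace ℝ (Fin N) → ℂ}
    (hf : ContDiff ℝ (n + L.length : ℕ) f) : ContDiff ℝ n (lderiv L f) := by
  induction L generalizing n with
  | nil => exact hf
  | cons j L ih =>
    refine pderivE_contDiff j (ih ?_)
    have e : n + 1 + L.length = n + (j :: L).length := by
      rw [List.length_cons]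
      omega
    rw [e]
    exact hf

lemma lderiv_perm {N : ℕ} {L L' : List (Fin N)} (h : L.Perm L')
    {f : EuclideanSpace ℝ (Fin N) → ℂ}
    (hf : ContDiff ℝ (L.length : ℕ) f) : lderiv L f = lderiv L' f := by
  induction h with
  | nil => rfl
  | cons j h ih =>
    have := ih (hf.of_le (by simp))
    simp only [lderiv, List.foldr_cons] at this ⊢
    rw [this]
  | swap i j L =>
    have : ContDiff ℝ (2 : ℕ) (lderiv L f) :=
      lderiv_contDiff L (by simpa [add_comm, add_assoc, add_left_comm] using hf)
    exact ddv_comm _ _ (by exact_mod_cast this)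
  | trans h1 h2 ih1 ih2 =>
    rw [ih1 hf, ih2 (by rwa [← h1.length_eq])]

lemma foldr_eq_lderiv {N : ℕ} (β : Fin N → ℕ) (L : List (Fin N))
    (f : EuclideanSpace ℝ (Fin N) → ℂ) :
    L.foldr (fun j g => (pderivE j)^[β j] g) f
      = lderiv (L.flatMap fun j => List.replicate (β j) j) f := by
  have hrep : ∀ (j : Fin N) n (g : EuclideanSpace ℝ (Fin N) → ℂ),
      (pderivE j)^[n] g = lderiv (List.replicate n j) g := by
    intro j n g
    induction n with
    | zero => rfl
    | succ n ih =>
      rw [Function.iterate_succ_apply', ih]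
      rfl
  induction L with
  | nil => rfl
  | cons j L ih =>
    rw [List.foldr_cons, ih, hrep, List.flatMap_cons]
    simp [lderiv, List.foldr_append]

lemma lderiv_eq_mderivE {N : ℕ} (L : List (Fin N)) {f : EuclideanSpace ℝ (Fin N) → ℂ}
    (hf : ContDiff ℝ (L.length : ℕ) f) : lderiv L f = mderivE (fun j => L.count j) f := by
  unfold mderivE
  rw [foldr_eq_lderiv]
  refine lderiv_perm ?_ hf
  rw [List.perm_iff_count]
  intro i
  rw [List.count_flatMap]
  simp only [Function.comp_def, List.count_replicate, beq_iff_eq]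
  rw [← Fin.sum_univ_def]
  simp

lemma ddv_eq_sum {N : ℕ} (v : EuclideanSpace ℝ (Fin N)) (f : EuclideanSpace ℝ (Fin N) → ℂ) :
    ddv v f = fun x => ∑ j, ((v j : ℝ) : ℂ) * pderivE j f x := by
  funext x
  unfold ddv pderivE
  have hv : v = ∑ j, v j • EuclideanSpace.single j (1 : ℝ) := by
    ext i
    simp [Pi.single_apply]
  conv_lhs => rw [hv]
  simp

lemma DecP_of_bound {N : ℕ} {a : ℝ} {ℓ : ℕ} {φ : EuclideanSpace ℝ (Fin N) → ℂ}
    (hφ : ContDiff ℝ (ℓ : ℕ) φ)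
    (hbound : ∀ β : Fin N → ℕ, (∑ j, β j) ≤ ℓ → ∀ x, ‖mderivE β φ x‖ ≤ decW a x)
    (m : ℕ) (L : List (Fin N)) (hL : m + L.length ≤ ℓ) : DecP (decW a) m (lderiv L φ) := by
  have hc : ContDiff ℝ m (lderiv L φ) :=
    lderiv_contDiff L (hφ.of_le (by exact_mod_cast hL))
  have hb : ∃ C, ∀ x, ‖lderiv L φ x‖ ≤ C * decW a x := by
    refine ⟨1, fun x => ?_⟩
    rw [one_mul, lderiv_eq_mderivE L (hφ.of_le (by exact_mod_cast (by omega : L.length ≤ ℓ)))]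
    refine hbound _ ?_ x
    have : ∑ j, L.count j = L.length := by
      have := Multiset.sum_count_eq_card (s := (Finset.univ : Finset (Fin N)))
        (m := (L : Multiset (Fin N))) (by simp)
      simpa using this
    omega
  induction m generalizing L with
  | zero => exact ⟨hc.continuous, hb⟩
  | succ m ih =>
    refine ⟨hc.differentiable (by simp), hb, fun v => ?_⟩
    rw [ddv_eq_sum]
    refine DecP.sum _ fun j _ => DecP.const_mul _ ?_
    have hb' : ∃ C, ∀ x, ‖lderiv (j :: L) φ x‖ ≤ C * decW a x := by
      refine ⟨1, fun x => ?_⟩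
      rw [one_mul, lderiv_eq_mderivE (j :: L)
        (hφ.of_le (by
          rw [List.length_cons]
          exact_mod_cast (by omega : L.length + 1 ≤ ℓ)))]
      refine hbound _ ?_ x
      have : ∑ i, (j :: L).count i = (j :: L).length := by
        have := Multiset.sum_count_eq_card (s := (Finset.univ : Finset (Fin N)))
          (m := ((j :: L : List (Fin N)) : Multiset (Fin N))) (by simp)
        simpa using this
      rw [this, List.length_cons]
      omega
    have hlen : m + (j :: L).length ≤ ℓ := by
      rw [List.length_cons]
      omega
    exact ih (j :: L) hlen
      (lderiv_contDiff (j :: L) (hφ.of_le (by exact_mod_cast hlen))) hb'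

theorem dunklTpow_decay
    (N : ℕ) (hN : 1 ≤ N)
    (R : Finset (EuclideanSpace ℝ (Fin N)))
    (k : EuclideanSpace ℝ (Fin N) → ℝ)
    (hR0 : (0 : EuclideanSpace ℝ (Fin N)) ∉ R)
    (hRnorm : ∀ α ∈ R, ‖α‖ = Real.sqrt 2)
    (hRrefl : ∀ α ∈ R, ∀ β ∈ R, dunklReflect α β ∈ R)
    (hk0 : ∀ α ∈ R, 0 ≤ k α)
    (hkinv : ∀ α ∈ R, ∀ β ∈ R, k (dunklReflect α β) = k β)
    (M : ℝ) (hM : 0 ≤ M) (ℓ : ℕ) (hℓ : 1 ≤ ℓ)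
    (φ : EuclideanSpace ℝ (Fin N) → ℂ) (hφ : ContDiff ℝ (ℓ : ℕ∞) φ)
    (hbound : ∀ β : Fin N → ℕ, (∑ j, β j) ≤ ℓ → ∀ x,
      ‖mderivE β φ x‖ ≤ (1 + ‖x‖) ^ (-(homDim N R k) - M)) :
    ∃ C : ℝ, 0 < C ∧ ∀ β : Fin N → ℕ, (∑ j, β j) ≤ ℓ →
      ∀ x : EuclideanSpace ℝ (Fin N), (∀ α ∈ R, ⟪α, x⟫ ≠ 0) →
        ‖dunklTpow N R k β φ x‖ ≤ C * (1 + ‖x‖) ^ (-(homDim N R k) - M) := by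
  set a : ℝ := homDim N R k + M with ha_def
  have ha : 0 ≤ a := by
    have : 0 ≤ ∑ α ∈ R, k α := Finset.sum_nonneg hk0
    have h2 : (0 : ℝ) ≤ N := Nat.cast_nonneg N
    rw [ha_def]
    unfold homDim
    linarith
  have hexp : -(homDim N R k) - M = -a := by
    rw [ha_def]
    ring
  rw [hexp] at hbound ⊢
  have hφ' : ContDiff ℝ (ℓ : ℕ) φ := by exact_mod_cast hφ
  have hP : DecP (decW a) ℓ φ := DecP_of_bound hφ' hbound ℓ [] (by simp)
  have hone : ∀ β : Fin N → ℕ, ∃ C : ℝ, 0 ≤ C ∧ ((∑ j, β j) ≤ ℓ →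
      ∀ x : EuclideanSpace ℝ (Fin N), (∀ α ∈ R, ⟪α, x⟫ ≠ 0) →
        ‖dunklTpow N R k β φ x‖ ≤ C * (1 + ‖x‖) ^ (-a)) := by
    intro β
    by_cases hβ : (∑ j, β j) ≤ ℓ
    · obtain ⟨g, hg, hgx⟩ := dunklT_foldr (k := k) hRnorm hRrefl ha β (f := φ)
        (List.finRange N) 0 (hP.mono (by rw [← Fin.sum_univ_def]; omega))
      obtain ⟨C, hC⟩ := hg.bound
      refine ⟨C, nonneg_of_decW hC, fun _ x hx => ?_⟩
      unfold dunklTpow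
      rw [hgx x hx]
      exact hC x
    · exact ⟨0, le_rfl, fun h => absurd h hβ⟩
  choose C hC0 hC using hone
  let S : Finset (Fin N → ℕ) := Fintype.piFinset fun _ => Finset.range (ℓ + 1)
  refine ⟨∑ β ∈ S, C β + 1, ?_, fun β hβ x hx => ?_⟩
  · have := Finset.sum_nonneg (s := S) fun β _ => hC0 β
    linarith
  · refine (hC β hβ x hx).trans (mul_le_mul_of_nonneg_right ?_ (by positivity))
    have hmem : β ∈ S := by
      simp only [S, Fintype.mem_piFinset, Finset.mem_range]
      intro j
      have := Finset.single_le_sum (f := β) (fun i _ => Nat.zero_le _) (Finset.mem_univ j)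
      omega
    have := Finset.single_le_sum (f := C) (fun β _ => hC0 β) hmem
    linarith
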